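/- Let X be a K-convex complex Banach space and p ∈ (1,∞). Then there exists c ∈ (0,∞) such that for every n,d,m ∈ ℕ with d + m ≤ n, every function f : {-1,1}^n → X of degree at most d + m which is also in the d-th tail space satisfies ‖Δ^{1/2} f‖_{L_p({-1,1}^n;X)} ≥ c · √(d/m) · ‖f‖_{L_p({-1,1}^n;X)}. -/

import Mathlib

open scoped BigOperators ENNReal NNReal

noncomputable section

namespace HammingCube

variable {X : Type*} [NormedAddCommGroup X] [NormedSpace ℂ X]

/-- The sign ±1 associated to a boolean coordinate. -/
def sgn (b : Bool) : ℝ := if b then 1 else -1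

/-- The Walsh function `w_A(ε) = ∏_{i ∈ A} ε_i`. -/
def walsh {n : ℕ} (A : Finset (Fin n)) (ε : Fin n → Bool) : ℝ := ∏ i ∈ A, sgn (ε i)

/-- The Fourier–Walsh coefficient `f̂(A) = 2⁻ⁿ ∑_δ f(δ) w_A(δ)`. -/
def coeff {n : ℕ} (f : (Fin n → Bool) → X) (A : Finset (Fin n)) : X :=
  (2 ^ n : ℝ)⁻¹ • ∑ δ : Fin n → Bool, walsh A δ • f δ

/-- `f` has degree at most `d`: `f̂(A) = 0` whenever `|A| > d`. -/
def degLE {n : ℕ} (f : (Fin n → Bool) → X) (d : ℕ) : Prop :=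
  ∀ A : Finset (Fin n), d < A.card → coeff f A = 0

/-- `f` belongs to the `d`-th tail space: `f̂(A) = 0` whenever `|A| < d`. -/
def tailSpace {n : ℕ} (f : (Fin n → Bool) → X) (d : ℕ) : Prop :=
  ∀ A : Finset (Fin n), A.card < d → coeff f A = 0

/-- The heat semigroup `e^{-tΔ} f = ∑_A e^{-t|A|} f̂(A) w_A`. -/
def heat {n : ℕ} (t : ℝ) (f : (Fin n → Bool) → X) : (Fin n → Bool) → X :=
  fun ε => ∑ A : Finset (Fin n), Real.exp (-t * A.card) • walsh A ε • coeff f A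

/-- The hypercube Laplacian `Δ f = ∑_A |A| f̂(A) w_A`. -/
def lap {n : ℕ} (f : (Fin n → Bool) → X) : (Fin n → Bool) → X :=
  fun ε => ∑ A : Finset (Fin n), (A.card : ℝ) • walsh A ε • coeff f A

/-- The fractional Laplacian `Δ^γ f = ∑_A |A|^γ f̂(A) w_A`. -/
def fracLap {n : ℕ} (γ : ℝ) (f : (Fin n → Bool) → X) : (Fin n → Bool) → X :=
  fun ε => ∑ A : Finset (Fin n), ((A.card : ℝ) ^ γ) • walsh A ε • coeff f A

/-- The `i`-th discrete partial derivative. -/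
def pderiv {n : ℕ} (i : Fin n) (f : (Fin n → Bool) → X) : (Fin n → Bool) → X :=
  fun ε => (2 : ℝ)⁻¹ • (f ε - f (Function.update ε i (!(ε i))))

/-- The vector-valued `L_p` norm `(2⁻ⁿ ∑_ε ‖f(ε)‖^p)^{1/p}` for finite `p`. -/
def lpNorm {n : ℕ} {Y : Type*} [NormedAddCommGroup Y] (p : ℝ)
    (f : (Fin n → Bool) → Y) : ℝ :=
  ((2 ^ n : ℝ)⁻¹ * ∑ ε : Fin n → Bool, ‖f ε‖ ^ p) ^ (1 / p)

/-- The `L_∞` norm `max_ε ‖f(ε)‖`. -/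
def linfNorm {n : ℕ} {Y : Type*} [NormedAddCommGroup Y]
    (f : (Fin n → Bool) → Y) : ℝ :=
  ⨆ ε : Fin n → Bool, ‖f ε‖

/-- The `L_p` norm for `p ∈ [1,∞]` encoded as `p : ℝ≥0∞`. -/
def lpNormE {n : ℕ} {Y : Type*} [NormedAddCommGroup Y] (p : ℝ≥0∞)
    (f : (Fin n → Bool) → Y) : ℝ :=
  if p = ⊤ then linfNorm f else lpNorm p.toReal f

/-- The scalar `L_p` norm of the gradient `‖(∑_i |∂_i f|²)^{1/2}‖_{L_p}`. -/
def gradLpNorm {n : ℕ} (p : ℝ) (f : (Fin n → Bool) → ℂ) : ℝ :=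
  lpNorm p (fun ε => Real.sqrt (∑ i : Fin n, ‖pderiv i f ε‖ ^ 2))

/-- The Rademacher projection `Rad f(ε) = ∑_i f̂({i}) ε_i`. -/
def Rad {n : ℕ} (f : (Fin n → Bool) → X) : (Fin n → Bool) → X :=
  fun ε => ∑ i : Fin n, sgn (ε i) • coeff f {i}

/-- A complex Banach space is `K`-convex if the Rademacher projections are uniformly
bounded on `L_q` for some `q ∈ (1,∞)`. -/
def KConvex (X : Type*) [NormedAddCommGroup X] [NormedSpace ℂ X] : Prop :=
  ∃ q : ℝ, 1 < q ∧ ∃ M : ℝ, ∀ (n : ℕ) (f : (Fin n → Bool) → X),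
    lpNorm q (Rad f) ≤ M * lpNorm q f

/-- `X` has cotype `q` with constant `C`. -/
def HasCotype (X : Type*) [NormedAddCommGroup X] [NormedSpace ℂ X] (q C : ℝ) : Prop :=
  ∀ (n : ℕ) (x : Fin n → X),
    C⁻¹ * (∑ i : Fin n, ‖x i‖ ^ q) ^ (1 / q) ≤
      ((2 ^ n : ℝ)⁻¹ * ∑ ε : Fin n → Bool, ‖∑ i : Fin n, sgn (ε i) • x i‖ ^ q) ^ (1 / q)

/-- The entropy `Ent(h)` of a nonnegative function on the cube. -/
def entropy {n : ℕ} (h : (Fin n → Bool) → ℝ) : ℝ :=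
  (2 ^ n : ℝ)⁻¹ * ∑ ε : Fin n → Bool, h ε * Real.log (h ε) -
    ((2 ^ n : ℝ)⁻¹ * ∑ ε : Fin n → Bool, h ε) *
      Real.log ((2 ^ n : ℝ)⁻¹ * ∑ ε : Fin n → Bool, h ε)

/-- The `L_∞` norm of the gradient `max_ε (∑_i |∂_i f(ε)|²)^{1/2}`. -/
def gradLinfNorm {n : ℕ} (f : (Fin n → Bool) → ℂ) : ℝ :=
  ⨆ ε : Fin n → Bool, Real.sqrt (∑ i : Fin n, ‖pderiv i f ε‖ ^ 2)

/-!
Let `f` have all its Walsh frequencies in `[d, d + m]`. Tested against a functional, the heat flow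
`t ↦ e^{-tΔ} f` is `x ^ d * Q x` at `x = e^{-t}`, where `Q` is a polynomial of degree at most `m`.
The heat semigroup contracts `L_p`, being convolution with a probability kernel, so this polynomial
is bounded on `(0, 1]` by the norm of `f`. Controlling `Q` near `0` by its size near `1` through
the growth of Chebyshev polynomials outside `[-1, 1]`, the factor `x ^ d` wins and
`‖e^{-tΔ} f‖ ≤ e^6 e^{-dt/(2m)} ‖f‖`. Applying this to `Δ^γ f` in the subordination formula
`Γ(γ) f = ∫₀^∞ t^{γ-1} e^{-tΔ} Δ^γ f dt` gives `‖f‖ ≤ e^6 (2m/d)^γ ‖Δ^γ f‖`.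
-/

section ChebyshevGrowth

open Polynomial

lemma eval_T_le_two_mul_pow (n : ℕ) {x : ℝ} (hx : 1 ≤ x) :
    (Chebyshev.T ℝ n).eval x ≤ (2 * x) ^ n := by
  have hnonneg : 0 ≤ Real.arcosh x := Real.arcosh_nonneg hx
  have hexp : Real.exp (Real.arcosh x) ≤ 2 * x := by
    have hsqrt : √(x ^ 2 - 1) ≤ x := Real.sqrt_le_iff.mpr ⟨by linarith, by linarith⟩
    linarith [Real.exp_arcosh hx]
  calc (Chebyshev.T ℝ n).eval x = Real.cosh (n * Real.arcosh x) := by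
        conv_lhs => rw [← Real.cosh_arcosh hx]
        exact_mod_cast Chebyshev.T_real_cosh (Real.arcosh x) n
    _ ≤ Real.exp (n * Real.arcosh x) := by
        have hle : Real.exp (-(n * Real.arcosh x)) ≤ Real.exp (n * Real.arcosh x) :=
          Real.exp_le_exp.mpr (by linarith [show 0 ≤ n * Real.arcosh x by positivity])
        rw [Real.cosh_eq]
        linarith
    _ = Real.exp (Real.arcosh x) ^ n := Real.exp_nat_mul _ n
    _ ≤ (2 * x) ^ n := by gcongr

lemma abs_eval_le_two_mul_pow {P : ℝ[X]} {n : ℕ} (hP : P.degree ≤ n)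
    (hbound : ∀ y ∈ Set.Icc (-1 : ℝ) 1, |P.eval y| ≤ 1) {x : ℝ} (hx : 1 ≤ x) :
    |P.eval x| ≤ (2 * x) ^ n := by
  have hT : ∀ R : ℝ[X], R.degree ≤ n → (∀ y ∈ Set.Icc (-1 : ℝ) 1, |R.eval y| ≤ 1) →
      R.eval x ≤ (2 * x) ^ n := fun R hR hRbound =>
    (Chebyshev.eval_iterate_derivative_le_of_forall_abs_le_one (k := 0) hx hR hRbound).trans
      (eval_T_le_two_mul_pow n hx)
  refine abs_le'.mpr ⟨hT P hP hbound, ?_⟩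
  simpa only [eval_neg] using hT (-P) (by rwa [degree_neg]) (by simpa only [eval_neg, abs_neg])

lemma abs_eval_le_pow_mul_of_le_left {P : ℝ[X]} {n : ℕ} (hP : P.natDegree ≤ n) {a b M : ℝ}
    (hab : a < b) (hM : 0 < M) (hbound : ∀ y ∈ Set.Icc a b, |P.eval y| ≤ M) {x : ℝ}
    (hx : x ≤ a) :
    |P.eval x| ≤ (4 * ((b - x) / (b - a))) ^ n * M := by
  have hba : 0 < b - a := sub_pos.mpr hab
  -- Onto `[a, b]` from `[-1, 1]`, reversing orientation so that `x ≤ a` comes from a point `≥ 1`.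
  let L : ℝ[X] := C (-((b - a) / 2)) * X + C ((a + b) / 2)
  let R : ℝ[X] := C M⁻¹ * P.comp L
  have hR : ∀ y, |R.eval y| = M⁻¹ * |P.eval ((a + b) / 2 - (b - a) / 2 * y)| := fun y => by
    have hL : L.eval y = (a + b) / 2 - (b - a) / 2 * y := by
      simp only [L, eval_add, eval_mul, eval_C, eval_X]
      ring
    simp [R, hL, abs_mul, abs_of_pos hM]
  have hdeg : R.degree ≤ n := by
    refine natDegree_le_iff_degree_le.mp ((natDegree_C_mul_le _ _).trans ?_)
    calc (P.comp L).natDegree ≤ P.natDegree * L.natDegree := natDegree_comp_le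
      _ ≤ P.natDegree * 1 := by gcongr; exact natDegree_linear_le
      _ ≤ n := by rwa [mul_one]
  have hRbound : ∀ y ∈ Set.Icc (-1 : ℝ) 1, |R.eval y| ≤ 1 := fun y ⟨hy₁, hy₂⟩ => by
    rw [hR, inv_mul_le_one₀ hM]
    exact hbound _ ⟨by nlinarith, by nlinarith⟩
  have hratio : 1 ≤ (b - x) / (b - a) := (one_le_div hba).mpr (by linarith)
  have hgrowth := abs_eval_le_two_mul_pow hdeg hRbound
    (x := 2 * ((b - x) / (b - a)) - 1) (by linarith)
  have hpoint : (a + b) / 2 - (b - a) / 2 * (2 * ((b - x) / (b - a)) - 1) = x := by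
    field_simp
    ring
  rw [hR, hpoint, inv_mul_le_iff₀ hM, mul_comm] at hgrowth
  refine hgrowth.trans ?_
  gcongr ?_ ^ n * M
  · linarith
  · linarith

lemma abs_pow_mul_eval_le {Q : ℝ[X]} {d m : ℕ} (hQ : Q.natDegree ≤ m) {M : ℝ}
    (hbound : ∀ y ∈ Set.Ioc (0 : ℝ) 1, |y ^ d * Q.eval y| ≤ M) {a x : ℝ} (hx : 0 < x)
    (hxa : x ≤ a) (ha : a < 1) :
    |x ^ d * Q.eval x| ≤ (x / a) ^ d * (4 * ((1 - x) / (1 - a))) ^ m * M := by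
  have ha₀ : 0 < a := hx.trans_le hxa
  have hxM : |x ^ d * Q.eval x| ≤ M := hbound x ⟨hx, hxa.trans ha.le⟩
  obtain hM | rfl := ((abs_nonneg _).trans hxM).lt_or_eq'
  · have hQbound : ∀ y ∈ Set.Icc a 1, |Q.eval y| ≤ (a ^ d)⁻¹ * M := fun y ⟨hay, hy⟩ => by
      have hy₀ : 0 < y := ha₀.trans_le hay
      have hyM := hbound y ⟨hy₀, hy⟩
      rw [abs_mul, abs_of_pos (pow_pos hy₀ d)] at hyM
      rw [le_inv_mul_iff₀ (by positivity)]
      exact le_trans (by gcongr) hyM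
    have hgrowth := abs_eval_le_pow_mul_of_le_left hQ ha (by positivity) hQbound hxa
    rw [abs_mul, abs_of_pos (pow_pos hx d)]
    calc x ^ d * |Q.eval x| ≤ x ^ d * ((4 * ((1 - x) / (1 - a))) ^ m * ((a ^ d)⁻¹ * M)) := by
          gcongr
      _ = (x / a) ^ d * (4 * ((1 - x) / (1 - a))) ^ m * M := by rw [div_pow]; ring
  · simpa using hxM

end ChebyshevGrowth

section ExponentialDecay

open Polynomial

lemma one_sub_exp_neg_div_le {s t : ℝ} (hs : 0 < s) (hst : s ≤ t) :
    (1 - Real.exp (-t)) / (1 - Real.exp (-s)) ≤ t / s := by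
  have ht : 0 < t := hs.trans_le hst
  have hlt : 0 < 1 - Real.exp (-s) := by simpa using hs
  have hconvex : Real.exp (-s) ≤ (1 - s / t) + s / t * Real.exp (-t) := by
    have h := convexOn_exp.2 (Set.mem_univ 0) (Set.mem_univ (-t))
      (sub_nonneg.mpr ((div_le_one ht).mpr hst)) (by positivity) (sub_add_cancel 1 (s / t))
    have hpoint : s / t * t = s := div_mul_cancel₀ s ht.ne'
    simpa [hpoint] using h
  rw [div_le_div_iff₀ hlt hs]
  calc (1 - Real.exp (-t)) * s = t * (s / t * (1 - Real.exp (-t))) := by field_simp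
    _ ≤ t * (1 - Real.exp (-s)) := by gcongr; linarith

lemma exp_one_sub_mul_four_mul_le {r : ℝ} (hr : 12 ≤ r) :
    Real.exp (1 - r) * (4 * r) ≤ Real.exp (-(r / 2)) := by
  have hlinear : r ≤ 4 * Real.exp (r / 4 - 1) := by linarith [Real.add_one_le_exp (r / 4 - 1)]
  have hsixteen : 16 ≤ Real.exp (r / 4) := calc
    (16 : ℝ) ≤ 2.7 ^ 3 := by norm_num
    _ ≤ Real.exp 1 ^ 3 := by gcongr; linarith [Real.exp_one_gt_d9]
    _ = Real.exp 3 := by rw [← Real.exp_nat_mul]; norm_num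
    _ ≤ Real.exp (r / 4) := Real.exp_le_exp.mpr (by linarith)
  calc Real.exp (1 - r) * (4 * r)
      ≤ Real.exp (1 - r) * (4 * (4 * Real.exp (r / 4 - 1))) := by gcongr
    _ = 16 * (Real.exp (1 - r) * Real.exp (r / 4 - 1)) := by ring
    _ ≤ Real.exp (r / 4) * (Real.exp (1 - r) * Real.exp (r / 4 - 1)) := by gcongr
    _ = Real.exp (-(r / 2)) := by simp only [← Real.exp_add]; ring_nf

lemma abs_exp_neg_pow_mul_eval_le_of_twelve_le {Q : ℝ[X]} {d m : ℕ} (hQ : Q.natDegree ≤ m)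
    (hm : 0 < m) {M : ℝ} (hbound : ∀ y ∈ Set.Ioc (0 : ℝ) 1, |y ^ d * Q.eval y| ≤ M) {t : ℝ}
    (hlarge : 12 ≤ t * d / m) :
    |Real.exp (-t) ^ d * Q.eval (Real.exp (-t))| ≤ Real.exp (-(t * d / m / 2)) ^ m * M := by
  have hM : 0 ≤ M := (abs_nonneg _).trans (hbound 1 ⟨one_pos, le_rfl⟩)
  have hd : (0 : ℝ) < d := by
    refine Nat.cast_pos.mpr (Nat.pos_of_ne_zero fun hd => ?_)
    norm_num [hd] at hlarge
  obtain ⟨r, hr⟩ : ∃ r, r = t * d / m := ⟨_, rfl⟩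
  rw [← hr] at hlarge ⊢
  -- Compare with the sup over `[exp (-s), 1]`, where `s = m / d` balances the two factors.
  obtain ⟨s, hs⟩ : ∃ s : ℝ, s = m / d := ⟨_, rfl⟩
  have hs₀ : 0 < s := by rw [hs]; positivity
  have hts : t = r * s := by rw [hr, hs]; field_simp
  have hst : s ≤ t := by rw [hts]; nlinarith
  have hle : Real.exp (-t) ≤ Real.exp (-s) := Real.exp_le_exp.mpr (neg_le_neg hst)
  have hlt : Real.exp (-s) < 1 := by simpa using hs₀
  have hdecay : (Real.exp (-t) / Real.exp (-s)) ^ d = Real.exp (1 - r) ^ m := by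
    rw [← Real.exp_sub, ← Real.exp_nat_mul, ← Real.exp_nat_mul, hts, hs]
    congr 1
    field_simp
    ring
  have hgrowth : (1 - Real.exp (-t)) / (1 - Real.exp (-s)) ≤ r := by
    rw [← mul_div_cancel_right₀ r hs₀.ne', ← hts]
    exact one_sub_exp_neg_div_le hs₀ hst
  have hratio : 0 ≤ (1 - Real.exp (-t)) / (1 - Real.exp (-s)) :=
    div_nonneg (by linarith) (by linarith)
  calc |Real.exp (-t) ^ d * Q.eval (Real.exp (-t))|
      ≤ Real.exp (1 - r) ^ m * (4 * ((1 - Real.exp (-t)) / (1 - Real.exp (-s)))) ^ m * M :=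
        hdecay ▸ abs_pow_mul_eval_le hQ hbound (Real.exp_pos _) hle hlt
    _ ≤ Real.exp (1 - r) ^ m * (4 * r) ^ m * M := by gcongr
    _ ≤ Real.exp (-(r / 2)) ^ m * M := by
        rw [← mul_pow]
        gcongr
        exact exp_one_sub_mul_four_mul_le hlarge

lemma abs_exp_neg_pow_mul_eval_le {Q : ℝ[X]} {d m : ℕ} (hQ : Q.natDegree ≤ m) (hm : 0 < m)
    {M : ℝ} (hbound : ∀ y ∈ Set.Ioc (0 : ℝ) 1, |y ^ d * Q.eval y| ≤ M) {t : ℝ} (ht : 0 ≤ t) :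
    |Real.exp (-t) ^ d * Q.eval (Real.exp (-t))| ≤
      Real.exp 6 * Real.exp (-(d / (2 * m) * t)) * M := by
  have hx : Real.exp (-t) ∈ Set.Ioc (0 : ℝ) 1 := ⟨Real.exp_pos _, by simpa using ht⟩
  have hM : 0 ≤ M := (abs_nonneg _).trans (hbound _ hx)
  have hhalf : (d : ℝ) / (2 * m) * t = t * d / m / 2 := by field_simp
  rw [hhalf, ← Real.exp_add]
  obtain hsmall | hlarge := lt_or_ge (t * d / m) 12
  · calc _ ≤ M := hbound _ hx
      _ ≤ Real.exp (6 + -(t * d / m / 2)) * M :=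
        le_mul_of_one_le_left hM (Real.one_le_exp (by linarith))
  · refine (abs_exp_neg_pow_mul_eval_le_of_twelve_le hQ hm hbound hlarge).trans ?_
    rw [← Real.exp_nat_mul]
    have hm₁ : (1 : ℝ) ≤ m := by exact_mod_cast hm
    gcongr
    nlinarith

end ExponentialDecay

section ExponentialSums

variable {ι E : Type*} [NormedAddCommGroup E] [NormedSpace ℝ E]

lemma norm_le_of_forall_dual_le {x : E} {M : ℝ}
    (h : ∀ φ : StrongDual ℝ E, ‖φ‖ ≤ 1 → |φ x| ≤ M) : ‖x‖ ≤ M := by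
  obtain ⟨φ, hφ, hφx⟩ := exists_dual_vector'' ℝ x
  simpa [hφx] using h φ hφ

lemma norm_sum_exp_smul_le (s : Finset ι) {k : ι → ℕ} {v : ι → E} {d m : ℕ} (hm : 0 < m)
    (hk : ∀ i ∈ s, k i ∈ Set.Icc d (d + m)) {M : ℝ}
    (hM : ∀ t : ℝ, 0 ≤ t → ‖∑ i ∈ s, Real.exp (-t * k i) • v i‖ ≤ M) {t : ℝ} (ht : 0 ≤ t) :
    ‖∑ i ∈ s, Real.exp (-t * k i) • v i‖ ≤ Real.exp 6 * Real.exp (-(d / (2 * m) * t)) * M := by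
  refine norm_le_of_forall_dual_le fun φ hφ => ?_
  let Q : Polynomial ℝ := ∑ i ∈ s, Polynomial.C (φ (v i)) * Polynomial.X ^ (k i - d)
  have hQ : Q.natDegree ≤ m := Polynomial.natDegree_sum_le_of_forall_le s _ fun i hi =>
    (Polynomial.natDegree_C_mul_X_pow_le _ _).trans (by have := hk i hi; grind)
  have heval : ∀ t : ℝ, φ (∑ i ∈ s, Real.exp (-t * k i) • v i) =
      Real.exp (-t) ^ d * Q.eval (Real.exp (-t)) := fun t => by
    simp only [Q, map_sum, map_smul, smul_eq_mul, Polynomial.eval_finsetSum, Finset.mul_sum]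
    refine Finset.sum_congr rfl fun i hi => ?_
    rw [mul_comm (-t), Real.exp_nat_mul, ← pow_mul_pow_sub _ (hk i hi).1]
    simp only [Polynomial.eval_mul, Polynomial.eval_C, Polynomial.eval_pow, Polynomial.eval_X]
    ring
  rw [heval]
  refine abs_exp_neg_pow_mul_eval_le hQ hm (fun y ⟨hy₀, hy₁⟩ => ?_) ht
  have hbound := φ.le_of_opNorm_le_of_le hφ
    (hM (-Real.log y) (by linarith [Real.log_nonpos hy₀.le hy₁]))
  rwa [heval, neg_neg, Real.exp_log hy₀, one_mul] at hbound

lemma integrableOn_rpow_mul_exp_neg_mul_Ioi {γ r : ℝ} (hγ : 0 < γ) (hr : 0 < r) :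
    MeasureTheory.IntegrableOn (fun t : ℝ => t ^ (γ - 1) * Real.exp (-(r * t))) (Set.Ioi 0) := by
  simpa only [Real.rpow_one, neg_mul] using
    integrableOn_rpow_mul_exp_neg_mul_rpow (s := γ - 1) (by linarith) one_pos hr

lemma integral_rpow_mul_sum_exp_mul (s : Finset ι) {l : ι → ℝ} (hl : ∀ i ∈ s, 0 < l i)
    (c : ι → ℝ) {γ : ℝ} (hγ : 0 < γ) :
    ∫ t in Set.Ioi (0 : ℝ), t ^ (γ - 1) * ∑ i ∈ s, Real.exp (-t * l i) * c i =
      (∑ i ∈ s, l i ^ (-γ) * c i) * Real.Gamma γ := by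
  have hterm : ∀ t : ℝ, t ^ (γ - 1) * ∑ i ∈ s, Real.exp (-t * l i) * c i =
      ∑ i ∈ s, t ^ (γ - 1) * Real.exp (-(l i * t)) * c i := fun t => by
    simp only [Finset.mul_sum, neg_mul, mul_comm t, mul_assoc]
  simp only [hterm]
  rw [MeasureTheory.integral_finsetSum _ fun i hi =>
    (integrableOn_rpow_mul_exp_neg_mul_Ioi hγ (hl i hi)).mul_const _, Finset.sum_mul]
  refine Finset.sum_congr rfl fun i hi => ?_
  rw [MeasureTheory.integral_mul_const, Real.integral_rpow_mul_exp_neg_mul_Ioi hγ (hl i hi),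
    one_div, Real.inv_rpow (hl i hi).le, Real.rpow_neg (hl i hi).le]
  ring

lemma norm_sum_rpow_neg_smul_le (s : Finset ι) {l : ι → ℝ} (hl : ∀ i ∈ s, 0 < l i) {v : ι → E}
    {γ r K : ℝ} (hγ : 0 < γ) (hr : 0 < r)
    (hK : ∀ t : ℝ, 0 ≤ t → ‖∑ i ∈ s, Real.exp (-t * l i) • v i‖ ≤ K * Real.exp (-(r * t))) :
    ‖∑ i ∈ s, l i ^ (-γ) • v i‖ ≤ K * r ^ (-γ) := by
  -- Subordination: `l ^ (-γ) = Γ(γ)⁻¹ ∫₀^∞ t ^ (γ - 1) exp (-t l) dt`.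
  refine norm_le_of_forall_dual_le fun φ hφ => ?_
  have hΓ : 0 < Real.Gamma γ := Real.Gamma_pos_of_pos hγ
  have hφK : ∀ t ∈ Set.Ioi (0 : ℝ), ‖t ^ (γ - 1) * ∑ i ∈ s, Real.exp (-t * l i) * φ (v i)‖ ≤
      K * (t ^ (γ - 1) * Real.exp (-(r * t))) := fun t ht => by
    have ht₀ : 0 ≤ t := le_of_lt ht
    have hφt := φ.le_of_opNorm_le_of_le hφ (hK t ht₀)
    simp only [map_sum, map_smul, smul_eq_mul, one_mul] at hφt
    rw [norm_mul, Real.norm_of_nonneg (by positivity), mul_left_comm]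
    gcongr
  refine le_of_mul_le_mul_right ?_ hΓ
  calc |φ (∑ i ∈ s, l i ^ (-γ) • v i)| * Real.Gamma γ
      = ‖∫ t in Set.Ioi (0 : ℝ), t ^ (γ - 1) * ∑ i ∈ s, Real.exp (-t * l i) * φ (v i)‖ := by
        rw [integral_rpow_mul_sum_exp_mul s hl _ hγ, norm_mul, Real.norm_of_nonneg hΓ.le]
        simp only [map_sum, map_smul, smul_eq_mul, Real.norm_eq_abs]
    _ ≤ ∫ t in Set.Ioi (0 : ℝ), K * (t ^ (γ - 1) * Real.exp (-(r * t))) :=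
        MeasureTheory.norm_integral_le_of_norm_le
          ((integrableOn_rpow_mul_exp_neg_mul_Ioi hγ hr).const_mul K)
          (MeasureTheory.ae_restrict_of_forall_mem measurableSet_Ioi hφK)
    _ = K * r ^ (-γ) * Real.Gamma γ := by
        rw [MeasureTheory.integral_const_mul, Real.integral_rpow_mul_exp_neg_mul_Ioi hγ hr,
          one_div, Real.inv_rpow hr.le, Real.rpow_neg hr.le, mul_assoc]

end ExponentialSums

section WalshExpansion

variable {n : ℕ}

lemma sgn_mul_self (b : Bool) : sgn b * sgn b = 1 := by cases b <;> simp [sgn]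

lemma walsh_eq_prod_univ (A : Finset (Fin n)) (ε : Fin n → Bool) :
    walsh A ε = ∏ i, if i ∈ A then sgn (ε i) else 1 := by
  rw [walsh, Finset.prod_ite_mem, Finset.univ_inter]

lemma sum_prod_mul_walsh (g : Fin n → Bool → ℝ) (A : Finset (Fin n)) :
    ∑ ε : Fin n → Bool, (∏ i, g i (ε i)) * walsh A ε =
      ∏ i, if i ∈ A then g i true - g i false else g i true + g i false := by
  simp only [walsh_eq_prod_univ, ← Finset.prod_mul_distrib]
  rw [← Fintype.prod_sum fun i b => g i b * if i ∈ A then sgn b else 1]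
  refine Finset.prod_congr rfl fun i _ => ?_
  split_ifs <;> simp [sgn, sub_eq_add_neg]

lemma sum_walsh_mul_walsh_apply (δ ε : Fin n → Bool) :
    ∑ A : Finset (Fin n), walsh A δ * walsh A ε = if δ = ε then 2 ^ n else 0 := by
  simp only [walsh, ← Finset.prod_mul_distrib]
  rw [← Finset.powerset_univ, ← Finset.prod_one_add]
  split_ifs with h
  · subst h
    simp only [sgn_mul_self]
    norm_num
  · obtain ⟨i, hi⟩ := Function.ne_iff.mp h
    refine Finset.prod_eq_zero (Finset.mem_univ i) ?_
    revert hi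
    cases δ i <;> cases ε i <;> simp [sgn]

lemma sum_walsh_mul_walsh (A B : Finset (Fin n)) :
    ∑ ε : Fin n → Bool, walsh A ε * walsh B ε = if A = B then 2 ^ n else 0 := by
  simp only [walsh_eq_prod_univ A]
  rw [sum_prod_mul_walsh fun i b => if i ∈ A then sgn b else 1]
  split_ifs with h
  · subst h
    rw [Finset.prod_eq_pow_card (b := 2) fun i _ => by split_ifs <;> norm_num [sgn]]
    simp
  · obtain ⟨i, hi⟩ : ∃ i, ¬(i ∈ A ↔ i ∈ B) := by simpa [Finset.ext_iff] using h
    refine Finset.prod_eq_zero (Finset.mem_univ i) ?_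
    by_cases hA : i ∈ A <;> simp_all [sgn]

lemma sum_walsh_smul_coeff (f : (Fin n → Bool) → X) (ε : Fin n → Bool) :
    ∑ A : Finset (Fin n), walsh A ε • coeff f A = f ε := by
  calc ∑ A : Finset (Fin n), walsh A ε • coeff f A
      = (2 ^ n : ℝ)⁻¹ • ∑ δ, (∑ A : Finset (Fin n), walsh A ε * walsh A δ) • f δ := by
        simp only [coeff, smul_comm (walsh _ ε), Finset.smul_sum, Finset.sum_smul, mul_smul]
        rw [Finset.sum_comm]
    _ = f ε := by simp [sum_walsh_mul_walsh_apply, ite_smul]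

lemma coeff_sum_walsh_smul (v : Finset (Fin n) → X) (B : Finset (Fin n)) :
    coeff (fun ε => ∑ A, walsh A ε • v A) B = v B := by
  calc coeff (fun ε => ∑ A, walsh A ε • v A) B
      = (2 ^ n : ℝ)⁻¹ • ∑ A, (∑ ε : Fin n → Bool, walsh B ε * walsh A ε) • v A := by
        simp only [coeff, Finset.smul_sum, Finset.sum_smul, mul_smul]
        rw [Finset.sum_comm]
    _ = v B := by simp [sum_walsh_mul_walsh, ite_smul]

lemma coeff_fracLap (γ : ℝ) (f : (Fin n → Bool) → X) (A : Finset (Fin n)) :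
    coeff (fracLap γ f) A = (A.card : ℝ) ^ γ • coeff f A := by
  rw [show fracLap γ f = fun ε => ∑ A, walsh A ε • (A.card : ℝ) ^ γ • coeff f A from
    funext fun ε => Finset.sum_congr rfl fun A _ => smul_comm _ _ _]
  exact coeff_sum_walsh_smul _ A

lemma degLE.fracLap {f : (Fin n → Bool) → X} {d : ℕ} (hf : degLE f d) (γ : ℝ) :
    degLE (fracLap γ f) d := fun A hA => by rw [coeff_fracLap, hf A hA, smul_zero]

lemma tailSpace.fracLap {f : (Fin n → Bool) → X} {d : ℕ} (hf : tailSpace f d) (γ : ℝ) :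
    tailSpace (fracLap γ f) d := fun A hA => by rw [coeff_fracLap, hf A hA, smul_zero]

end WalshExpansion

section HeatSemigroup

variable {n : ℕ}

/-- The product of two sign vectors in the group `{-1,1}^n`, in the boolean encoding. -/
def signMul (δ ε : Fin n → Bool) : Fin n → Bool := fun i => δ i == ε i

/-- The Poisson kernel `∏ i, (1 + x δ_i) / 2` of the cube: convolution with it multiplies the
coefficient of `w_A` by `x ^ |A|`. -/
def poissonKernel (x : ℝ) (δ : Fin n → Bool) : ℝ := ∏ i, (1 + x * sgn (δ i)) / 2

lemma signMul_involutive (δ : Fin n → Bool) : Function.Involutive (signMul δ) := fun ε => by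
  funext i
  cases hδ : δ i <;> cases hε : ε i <;> simp [signMul, hδ, hε]

lemma walsh_signMul (A : Finset (Fin n)) (δ ε : Fin n → Bool) :
    walsh A (signMul δ ε) = walsh A δ * walsh A ε := by
  rw [walsh, walsh, walsh, ← Finset.prod_mul_distrib]
  refine Finset.prod_congr rfl fun i _ => ?_
  cases hδ : δ i <;> cases hε : ε i <;> simp [sgn, signMul, hδ, hε]

lemma poissonKernel_nonneg {x : ℝ} (hx₀ : 0 ≤ x) (hx₁ : x ≤ 1) (δ : Fin n → Bool) :
    0 ≤ poissonKernel x δ := Finset.prod_nonneg fun i _ => by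
  cases δ i <;> simp only [sgn] <;> norm_num <;> linarith

lemma sum_poissonKernel_mul_walsh (x : ℝ) (A : Finset (Fin n)) :
    ∑ δ : Fin n → Bool, poissonKernel x δ * walsh A δ = x ^ A.card := by
  simp only [poissonKernel]
  rw [sum_prod_mul_walsh fun _ b => (1 + x * sgn b) / 2]
  calc _ = ∏ i, if i ∈ A then x else 1 := Finset.prod_congr rfl fun i _ => by
        split_ifs <;> simp only [sgn] <;> norm_num <;> ring
    _ = x ^ A.card := by rw [Finset.prod_ite_mem, Finset.univ_inter, Finset.prod_const]

lemma sum_poissonKernel (x : ℝ) : ∑ δ : Fin n → Bool, poissonKernel x δ = 1 := by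
  simpa [walsh] using sum_poissonKernel_mul_walsh x (∅ : Finset (Fin n))

lemma heat_eq_sum_poissonKernel_smul (t : ℝ) (f : (Fin n → Bool) → X) (ε : Fin n → Bool) :
    heat t f ε = ∑ δ, poissonKernel (Real.exp (-t)) δ • f (signMul δ ε) := by
  calc heat t f ε
      = ∑ A, ∑ δ, poissonKernel (Real.exp (-t)) δ • walsh A (signMul δ ε) • coeff f A := by
        refine Finset.sum_congr rfl fun A _ => ?_
        rw [mul_comm (-t), Real.exp_nat_mul, ← sum_poissonKernel_mul_walsh, Finset.sum_smul]
        simp only [walsh_signMul, mul_smul]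
    _ = ∑ δ, poissonKernel (Real.exp (-t)) δ • f (signMul δ ε) := by
        rw [Finset.sum_comm]
        simp only [← Finset.smul_sum, sum_walsh_smul_coeff]

/-- The component `f̂(A) w_A` of `f` as an element of `ℓ_p({-1,1}^n; X)`. -/
def walshTerm (p : ℝ≥0∞) (f : (Fin n → Bool) → X) (A : Finset (Fin n)) :
    PiLp p fun _ : Fin n → Bool => X :=
  WithLp.toLp p fun ε => walsh A ε • coeff f A

lemma sum_smul_walshTerm (p : ℝ≥0∞) {f : (Fin n → Bool) → X} {a b : ℕ} (htail : tailSpace f a)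
    (hdeg : degLE f b) (φ : ℕ → ℝ) :
    ∑ A with A.card ∈ Set.Icc a b, φ A.card • walshTerm p f A =
      WithLp.toLp p fun ε => ∑ A : Finset (Fin n), φ A.card • walsh A ε • coeff f A := by
  rw [Finset.sum_filter_of_ne]
  · ext ε
    simp [walshTerm]
  · intro A _ hne
    by_contra hA
    have hzero : coeff f A = 0 := by
      obtain h | h := not_and_or.mp hA
      · exact htail A (not_le.mp h)
      · exact hdeg A (not_le.mp h)
    refine hne ?_
    ext ε
    simp [walshTerm, hzero]

variable (p : ℝ≥0∞) [Fact (1 ≤ p)]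

lemma norm_toLp_comp_signMul (f : (Fin n → Bool) → X) (δ : Fin n → Bool) :
    ‖WithLp.toLp p fun ε => f (signMul δ ε)‖ = ‖WithLp.toLp p f‖ :=
  (LinearIsometryEquiv.piLpCongrLeft p ℝ X (signMul_involutive δ).toPerm).norm_map
    (WithLp.toLp p f)

lemma norm_toLp_heat_le {t : ℝ} (ht : 0 ≤ t) (f : (Fin n → Bool) → X) :
    ‖WithLp.toLp p (heat t f)‖ ≤ ‖WithLp.toLp p f‖ := by
  have hheat : WithLp.toLp p (heat t f) = ∑ δ, poissonKernel (Real.exp (-t)) δ •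
      WithLp.toLp p fun ε => f (signMul δ ε) := by
    ext ε
    simp [heat_eq_sum_poissonKernel_smul]
  rw [hheat]
  refine (norm_sum_le _ _).trans_eq ?_
  simp only [norm_smul, norm_toLp_comp_signMul, ← Finset.sum_mul, Real.norm_of_nonneg
    (poissonKernel_nonneg (Real.exp_pos _).le (Real.exp_le_one_iff.mpr (neg_nonpos.mpr ht)) _),
    sum_poissonKernel, one_mul]

lemma norm_toLp_heat_le_of_tailSpace_of_degLE {f : (Fin n → Bool) → X} {d m : ℕ} (hm : 0 < m)
    (htail : tailSpace f d) (hdeg : degLE f (d + m)) {t : ℝ} (ht : 0 ≤ t) :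
    ‖WithLp.toLp p (heat t f)‖ ≤
      Real.exp 6 * Real.exp (-(d / (2 * m) * t)) * ‖WithLp.toLp p f‖ := by
  have hsum : ∀ t : ℝ, WithLp.toLp p (heat t f) =
      ∑ A with A.card ∈ Set.Icc d (d + m), Real.exp (-t * A.card) • walshTerm p f A :=
    fun t => (sum_smul_walshTerm p htail hdeg fun k => Real.exp (-t * k)).symm
  rw [hsum]
  exact norm_sum_exp_smul_le _ hm (fun A hA => (Finset.mem_filter.mp hA).2)
    (fun t ht => hsum t ▸ norm_toLp_heat_le p ht f) ht

lemma norm_toLp_le_norm_toLp_fracLap {f : (Fin n → Bool) → X} {d m : ℕ} (hd : 0 < d)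
    (hm : 0 < m) (htail : tailSpace f d) (hdeg : degLE f (d + m)) {γ : ℝ} (hγ : 0 < γ) :
    ‖WithLp.toLp p f‖ ≤
      Real.exp 6 * (d / (2 * m) : ℝ) ^ (-γ) * ‖WithLp.toLp p (fracLap γ f)‖ := by
  have hsum := sum_smul_walshTerm p (htail.fracLap γ) (hdeg.fracLap γ)
  have hf : ∑ A with A.card ∈ Set.Icc d (d + m),
      (A.card : ℝ) ^ (-γ) • walshTerm p (fracLap γ f) A = WithLp.toLp p f := by
    rw [hsum fun k => (k : ℝ) ^ (-γ)]
    congr 1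
    funext ε
    rw [← sum_walsh_smul_coeff f ε]
    refine Finset.sum_congr rfl fun A _ => ?_
    obtain hA | hA := A.card.eq_zero_or_pos
    · simp [coeff_fracLap, htail A (hA ▸ hd)]
    · rw [coeff_fracLap, smul_comm (walsh A ε), smul_smul, ← Real.rpow_add (Nat.cast_pos.mpr hA),
        neg_add_cancel, Real.rpow_zero, one_smul]
  rw [← hf, mul_right_comm]
  refine norm_sum_rpow_neg_smul_le _ (fun A hA => ?_) hγ (by positivity) fun t ht => ?_
  · exact Nat.cast_pos.mpr (hd.trans_le (Finset.mem_filter.mp hA).2.1)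
  · rw [hsum fun k => Real.exp (-t * k), mul_right_comm]
    exact norm_toLp_heat_le_of_tailSpace_of_degLE p hm (htail.fracLap γ) (hdeg.fracLap γ) ht

end HeatSemigroup

section LpNorm

variable {n : ℕ} {Y : Type*} [NormedAddCommGroup Y]

lemma lpNormE_eq (p : ℝ≥0∞) [Fact (1 ≤ p)] (f : (Fin n → Bool) → Y) :
    lpNormE p f = ((2 ^ n : ℝ)⁻¹) ^ (1 / p.toReal) * ‖WithLp.toLp p f‖ := by
  obtain rfl | hp := eq_or_ne p ⊤
  · simp [lpNormE, linfNorm, PiLp.norm_eq_ciSup]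
  · have hp₀ : 0 < p.toReal := ENNReal.toReal_pos (zero_lt_one.trans_le Fact.out).ne' hp
    rw [lpNormE, if_neg hp, lpNorm, PiLp.norm_eq_sum hp₀]
    exact Real.mul_rpow (by positivity) (by positivity)

lemma lpNormE_ofReal {p : ℝ} (hp : 0 ≤ p) (f : (Fin n → Bool) → Y) :
    lpNormE (ENNReal.ofReal p) f = lpNorm p f := by
  rw [lpNormE, if_neg ENNReal.ofReal_ne_top, ENNReal.toReal_ofReal hp]

end LpNorm

theorem stmt18_general {p : ℝ≥0∞} (hp : 1 ≤ p) {γ : ℝ} (hγ : 0 < γ) {n d m : ℕ} (hd : 0 < d)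
    (hm : 0 < m) {f : (Fin n → Bool) → X} (hdeg : degLE f (d + m)) (htail : tailSpace f d) :
    (Real.exp 6 * 2 ^ γ)⁻¹ * ((d : ℝ) / m) ^ γ * lpNormE p f ≤ lpNormE p (fracLap γ f) := by
  have : Fact (1 ≤ p) := ⟨hp⟩
  have hconst : Real.exp 6 * (d / (2 * m) : ℝ) ^ (-γ) =
      ((Real.exp 6 * 2 ^ γ)⁻¹ * ((d : ℝ) / m) ^ γ)⁻¹ := by
    rw [Real.rpow_neg (by positivity), mul_comm (2 : ℝ), ← div_div,
      Real.div_rpow (by positivity) zero_le_two]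
    field_simp
  have hnorm := norm_toLp_le_norm_toLp_fracLap p hd hm htail hdeg hγ
  rw [hconst, le_inv_mul_iff₀ (by positivity)] at hnorm
  rw [lpNormE_eq, lpNormE_eq, mul_left_comm]
  gcongr

/-- **Reverse Bernstein–Markov inequality for `Δ^{1/2}`** on `K`-convex spaces. -/
theorem stmt18 {X : Type*} [NormedAddCommGroup X] [NormedSpace ℂ X] [CompleteSpace X]
    (hX : KConvex X) (p : ℝ) (hp : 1 < p) :
    ∃ c : ℝ, 0 < c ∧
      ∀ n d m : ℕ, 1 ≤ d → 1 ≤ m → d + m ≤ n →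
        ∀ f : (Fin n → Bool) → X, degLE f (d + m) → tailSpace f d →
          c * Real.sqrt ((d : ℝ) / (m : ℝ)) * lpNorm p f ≤
            lpNorm p (fracLap (1 / 2) f) := by
  refine ⟨(Real.exp 6 * 2 ^ (1 / 2 : ℝ))⁻¹, by positivity, fun n d m hd hm _ f hdeg htail => ?_⟩
  simpa [lpNormE_ofReal (zero_le_one.trans hp.le), Real.sqrt_eq_rpow] using
    stmt18_general (ENNReal.one_le_ofReal.mpr hp.le) one_half_pos hd hm hdeg htail

end HammingCube
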